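/- arXiv:0810.1227 — 2 statements merged into one kernel-verified Lean document; each statement's English description precedes it below -/
import Mathlib

section
/- For every k ≥ 1, ι(𝔡et_q^{(k)}) = det_q^k in A_q(n, nk). -/
open scoped BigOperators

/-- Free algebra on two families of generators `x_{ij}` and `x*_{ij}`. -/
abbrev FA2 (R : Type*) [CommRing R] (n : ℕ) :=
  FreeAlgebra R ((Fin n × Fin n) ⊕ (Fin n × Fin n))

/-- The generator `x_{ij}`. -/
def Xg (R : Type*) [CommRing R] (n : ℕ) (i j : Fin n) : FA2 R n :=
  FreeAlgebra.ι R (Sum.inl (i, j))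

/-- The generator `x*_{ij}`. -/
def Xs (R : Type*) [CommRing R] (n : ℕ) (i j : Fin n) : FA2 R n :=
  FreeAlgebra.ι R (Sum.inr (i, j))

/-- The monomial in the `x`-generators given by a list of index pairs. -/
def xW (R : Type*) [CommRing R] (n : ℕ) (l : List (Fin n × Fin n)) : FA2 R n :=
  (l.map fun p => Xg R n p.1 p.2).prod

/-- The monomial in the `x*`-generators given by a list of index pairs. -/
def xsW (R : Type*) [CommRing R] (n : ℕ) (l : List (Fin n × Fin n)) : FA2 R n :=
  (l.map fun p => Xs R n p.1 p.2).prod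

/-- The quantum-matrix relations among the `x`-generators (parameter `q`). -/
def XRel2 (R : Type*) [CommRing R] (q : Rˣ) (n : ℕ) (h : FA2 R n) : Prop :=
  (∃ i j k : Fin n, i < j ∧
    h = Xg R n i k * Xg R n j k - (q : R) • (Xg R n j k * Xg R n i k)) ∨
  (∃ k i j : Fin n, i < j ∧
    h = Xg R n k i * Xg R n k j - (q : R) • (Xg R n k j * Xg R n k i)) ∨
  (∃ i j k l : Fin n, i < k ∧ l < j ∧
    h = Xg R n i j * Xg R n k l - Xg R n k l * Xg R n i j) ∨
  (∃ i j k l : Fin n, i < k ∧ j < l ∧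
    h = Xg R n i j * Xg R n k l - Xg R n k l * Xg R n i j -
      ((q : R) - ((q⁻¹ : Rˣ) : R)) • (Xg R n i l * Xg R n k j))

/-- The quantum-matrix relations among the `x*`-generators (parameter `q⁻¹`). -/
def XsRel2 (R : Type*) [CommRing R] (q : Rˣ) (n : ℕ) (h : FA2 R n) : Prop :=
  (∃ i j k : Fin n, i < j ∧
    h = Xs R n i k * Xs R n j k - ((q⁻¹ : Rˣ) : R) • (Xs R n j k * Xs R n i k)) ∨
  (∃ k i j : Fin n, i < j ∧
    h = Xs R n k i * Xs R n k j - ((q⁻¹ : Rˣ) : R) • (Xs R n k j * Xs R n k i)) ∨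
  (∃ i j k l : Fin n, i < k ∧ l < j ∧
    h = Xs R n i j * Xs R n k l - Xs R n k l * Xs R n i j) ∨
  (∃ i j k l : Fin n, i < k ∧ j < l ∧
    h = Xs R n i j * Xs R n k l - Xs R n k l * Xs R n i j +
      ((q : R) - ((q⁻¹ : Rˣ) : R)) • (Xs R n i l * Xs R n k j))

/-- The generating set of the submodule `Y` of relations defining
`A_q(n;r,s)` inside `F(n,r) ⊗ F_*(n,s)` (monomials are written with all
`x`-letters in front of all `x*`-letters). -/
def Ygen (R : Type*) [CommRing R] (q : Rˣ) (n : ℕ) (r s : ℕ) : Set (FA2 R n) :=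
  {a | (∃ (u v w : List (Fin n × Fin n)) (h2 : FA2 R n),
          u.length + v.length + 2 = r ∧ w.length = s ∧ XRel2 R q n h2 ∧
          a = xW R n u * h2 * xW R n v * xsW R n w) ∨
       (∃ (u w1 w2 : List (Fin n × Fin n)) (h2 : FA2 R n),
          u.length = r ∧ w1.length + w2.length + 2 = s ∧ XsRel2 R q n h2 ∧
          a = xW R n u * xsW R n w1 * h2 * xsW R n w2) ∨
       (∃ (i j : Fin n) (u v w1 w2 : List (Fin n × Fin n)),
          i ≠ j ∧ u.length + v.length + 1 = r ∧ w1.length + w2.length + 1 = s ∧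
          a = ∑ k : Fin n,
            xW R n u * Xg R n i k * xW R n v * xsW R n w1 * Xs R n j k * xsW R n w2) ∨
       (∃ (i j : Fin n) (u v w1 w2 : List (Fin n × Fin n)),
          i ≠ j ∧ u.length + v.length + 1 = r ∧ w1.length + w2.length + 1 = s ∧
          a = ∑ k : Fin n, ((q ^ (2 * ((k : ℕ) + 1)) : Rˣ) : R) •
            (xW R n u * Xg R n k i * xW R n v * xsW R n w1 * Xs R n k j * xsW R n w2)) ∨
       (∃ (i j : Fin n) (u v w1 w2 : List (Fin n × Fin n)),
          u.length + v.length + 1 = r ∧ w1.length + w2.length + 1 = s ∧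
          a = (∑ k : Fin n, ((q ^ (2 * (k : ℤ) - 2 * (i : ℤ)) : Rˣ) : R) •
                (xW R n u * Xg R n k i * xW R n v * xsW R n w1 * Xs R n k i * xsW R n w2)) -
              ∑ k : Fin n,
                xW R n u * Xg R n j k * xW R n v * xsW R n w1 * Xs R n j k * xsW R n w2)}

/-- The submodule `Y` of relations defining `A_q(n;r,s)`. -/
def Ysub (R : Type*) [CommRing R] (q : Rˣ) (n : ℕ) (r s : ℕ) : Submodule R (FA2 R n) :=
  Submodule.span R (Ygen R q n r s)

/-- The `R`-span `F(n,r) ⊗ F_*(n,s)` of the bidegree-`(r,s)` monomials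
(`x`-letters first). -/
def Frs (R : Type*) [CommRing R] (n : ℕ) (r s : ℕ) : Submodule R (FA2 R n) :=
  Submodule.span R
    {a | ∃ u v : List (Fin n × Fin n), u.length = r ∧ v.length = s ∧
          a = xW R n u * xsW R n v}

/-- The element `𝔡et_q^{(k)}` of `A_q(n;k,k)` (here: its canonical
representative in the span of monomials), defined recursively by
`𝔡et_q^{(0)} = 1` and `𝔡et_q^{(k)} = Σ_l x_{1l}·𝔡et_q^{(k−1)}·x*_{1l}`. -/
noncomputable def detMix (R : Type*) [CommRing R] (n : ℕ) [NeZero n] : ℕ → FA2 R n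
  | 0 => 1
  | (k + 1) => ∑ l : Fin n, Xg R n 0 l * detMix R n k * Xs R n 0 l

/-- Number of inversions of a permutation of `Fin k` (its Coxeter length). -/
def invCount {k : ℕ} (w : Equiv.Perm (Fin k)) : ℕ :=
  ((Finset.univ : Finset (Fin k × Fin k)).filter
    (fun p => p.1 < p.2 ∧ w p.2 < w p.1)).card

/-- Ordered product of a tuple of elements in a (possibly noncommutative) monoid. -/
def oprod {A : Type*} [Monoid A] {k : ℕ} (g : Fin k → A) : A :=
  (List.ofFn g).prod

/-- The increasing enumeration of `{1,…,n} \ {i}` (0-based). -/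
def omitIdx {n : ℕ} (i : Fin n) (t : Fin (n - 1)) : Fin n :=
  if (t : ℕ) < (i : ℕ) then ⟨t, by have := t.2; omega⟩ else ⟨(t : ℕ) + 1, by have := t.2; omega⟩

/-- The sequence `i, f 0, f 1, …` of length `n` (prepending an entry to a
sequence of length `n-1`). -/
def consSeq {n : ℕ} (i : Fin n) (f : Fin (n - 1) → Fin n) : Fin n → Fin n :=
  fun t => if h : (t : ℕ) = 0 then i else f ⟨(t : ℕ) - 1, by have := t.2; omega⟩

/-- The defining relations of the quantum matrix bialgebra `A_q(n)`. -/
inductive QMRel (R : Type*) [CommRing R] (q : Rˣ) (n : ℕ) :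
    FreeAlgebra R (Fin n × Fin n) → FreeAlgebra R (Fin n × Fin n) → Prop
  | col {i j k : Fin n} (h : i < j) :
      QMRel R q n (FreeAlgebra.ι R (i, k) * FreeAlgebra.ι R (j, k))
        ((q : R) • (FreeAlgebra.ι R (j, k) * FreeAlgebra.ι R (i, k)))
  | row {k i j : Fin n} (h : i < j) :
      QMRel R q n (FreeAlgebra.ι R (k, i) * FreeAlgebra.ι R (k, j))
        ((q : R) • (FreeAlgebra.ι R (k, j) * FreeAlgebra.ι R (k, i)))
  | comm {i j k l : Fin n} (h1 : i < k) (h2 : l < j) :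
      QMRel R q n (FreeAlgebra.ι R (i, j) * FreeAlgebra.ι R (k, l))
        (FreeAlgebra.ι R (k, l) * FreeAlgebra.ι R (i, j))
  | qcomm {i j k l : Fin n} (h1 : i < k) (h2 : j < l) :
      QMRel R q n (FreeAlgebra.ι R (i, j) * FreeAlgebra.ι R (k, l))
        (FreeAlgebra.ι R (k, l) * FreeAlgebra.ι R (i, j) +
          ((q : R) - ((q⁻¹ : Rˣ) : R)) • (FreeAlgebra.ι R (i, l) * FreeAlgebra.ι R (k, j)))

/-- The quantum matrix bialgebra `A_q(n)`. -/
abbrev AqAlg (R : Type*) [CommRing R] (q : Rˣ) (n : ℕ) := RingQuot (QMRel R q n)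

/-- The generator `x_{ij}` of `A_q(n)`. -/
def xq (R : Type*) [CommRing R] (q : Rˣ) (n : ℕ) (i j : Fin n) : AqAlg R q n :=
  RingQuot.mkAlgHom R (QMRel R q n) (FreeAlgebra.ι R (i, j))

/-- The right quantum minor `(i_1 … i_k | j_1 … j_k)_r` for an increasing row
sequence and an arbitrary column sequence. -/
noncomputable def qMinorR (R : Type*) [CommRing R] (q : Rˣ) (n : ℕ) {k : ℕ}
    (rows cols : Fin k → Fin n) : AqAlg R q n :=
  ∑ w : Equiv.Perm (Fin k),
    (((-q) ^ invCount w : Rˣ) : R) • oprod (fun t => xq R q n (rows (w t)) (cols t))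

/-- The left quantum minor `(i_1 … i_k | j_1 … j_k)_l` for an arbitrary row
sequence and an increasing column sequence. -/
noncomputable def qMinorL (R : Type*) [CommRing R] (q : Rˣ) (n : ℕ) {k : ℕ}
    (rows cols : Fin k → Fin n) : AqAlg R q n :=
  ∑ w : Equiv.Perm (Fin k),
    (((-q) ^ invCount w : Rˣ) : R) • oprod (fun t => xq R q n (rows t) (cols (w t)))

/-- The quantum determinant. -/
noncomputable def detq (R : Type*) [CommRing R] (q : Rˣ) (n : ℕ) : AqAlg R q n :=
  qMinorR R q n (fun t => t) (fun t => t)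

/-- The complementary `(n-1) × (n-1)` quantum minor `(1…î…n | 1…ĵ…n)`. -/
noncomputable def compMinor (R : Type*) [CommRing R] (q : Rˣ) (n : ℕ) (i j : Fin n) :
    AqAlg R q n :=
  qMinorR R q n (omitIdx i) (omitIdx j)

/-- The algebra homomorphism `ι̂` from the free algebra on the `x`- and
`x*`-generators to `A_q(n)`, determined by `x_{ij} ↦ x_{ij}` and
`x*_{ij} ↦ (−q)^{j−i}·(1…î…n | 1…ĵ…n)`. -/
noncomputable def iotaHat (R : Type*) [CommRing R] (q : Rˣ) (n : ℕ) :
    FA2 R n →ₐ[R] AqAlg R q n :=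
  FreeAlgebra.lift R fun g =>
    match g with
    | Sum.inl (i, j) => xq R q n i j
    | Sum.inr (i, j) => (((-q) ^ ((j : ℤ) - (i : ℤ)) : Rˣ) : R) • compMinor R q n i j

/-- The homogeneous component `A_q(n,m)`: the `R`-span in `A_q(n)` of the
degree-`m` monomials. -/
noncomputable def AqDeg (R : Type*) [CommRing R] (q : Rˣ) (n : ℕ) (m : ℕ) :
    Submodule R (AqAlg R q n) :=
  Submodule.span R
    {a | ∃ g : List (Fin n × Fin n), g.length = m ∧ a = (g.map fun p => xq R q n p.1 p.2).prod}


section aux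
variable {R : Type*} [CommRing R] {A : Type*} [Ring A] [Algebra R A]

/-- Generic quantum permanent-type sum. -/
noncomputable def PP (q : Rˣ) {k : ℕ} (g : Fin k → Fin k → A) : A :=
  ∑ w : Equiv.Perm (Fin k),
    (((-q) ^ invCount w : Rˣ) : R) • oprod (fun t => g t (w t))

lemma invCount_eq {k : ℕ} (w : Equiv.Perm (Fin k)) :
    invCount w = ∑ i, ∑ j, if i < j ∧ w j < w i then 1 else 0 := by
  unfold invCount
  rw [Finset.card_filter, Fintype.sum_prod_type]

lemma card_lt' {k : ℕ} (p : Fin (k+1)) (e : Equiv.Perm (Fin k)) :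
    (∑ j, if p.succAbove (e j) < p then 1 else 0) = (p : ℕ) := by
  rw [Equiv.sum_comp e (fun j => if p.succAbove j < p then 1 else 0)]
  simp only [Fin.succAbove_lt_iff_castSucc_lt]
  simp only [Fin.lt_def, Fin.val_castSucc]
  rw [Fin.sum_univ_eq_sum_range (fun j => if j < (p:ℕ) then 1 else 0) k,
    ← Finset.card_filter]
  have : (Finset.range k).filter (fun j => j < (p:ℕ)) = Finset.range p := by
    ext j; simp; have := p.2; omega
  rw [this, Finset.card_range]

lemma card_gt' {k : ℕ} (p : Fin (k+1)) (e : Equiv.Perm (Fin k)) :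
    (∑ j, if p < p.succAbove (e j) then 1 else 0) = k - (p : ℕ) := by
  have h := card_lt' p e
  have h2 : (∑ j, ((if p < p.succAbove (e j) then 1 else 0) +
      (if p.succAbove (e j) < p then 1 else 0))) = k := by
    rw [Finset.sum_congr rfl (g := fun _ => 1)]
    · simp
    · intro j _
      rcases lt_or_gt_of_ne (Fin.succAbove_ne p (e j)) with h | h
      · simp [h, not_lt.2 h.le]
      · simp [h, not_lt.2 h.le]
  rw [Finset.sum_add_distrib, h] at h2
  omega

/-- prepend -/
noncomputable def pcons {k : ℕ} (p : Fin (k+1)) (e : Equiv.Perm (Fin k)) : Equiv.Perm (Fin (k+1)) :=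
  Equiv.ofBijective (Fin.cons p (fun t => p.succAbove (e t)) : Fin (k+1) → Fin (k+1)) (by
    rw [← Finite.injective_iff_bijective, Fin.cons_injective_iff]
    refine ⟨?_, fun a b h => e.injective (Fin.succAbove_right_injective h)⟩
    rintro ⟨t, ht⟩
    exact Fin.succAbove_ne _ _ ht)

/-- append -/
noncomputable def psnoc {k : ℕ} (p : Fin (k+1)) (e : Equiv.Perm (Fin k)) : Equiv.Perm (Fin (k+1)) :=
  Equiv.ofBijective (Fin.snoc (α := fun _ => Fin (k+1)) (fun t => p.succAbove (e t)) p : Fin (k+1) → Fin (k+1)) (by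
    rw [← Finite.injective_iff_bijective, Fin.snoc_injective_iff]
    refine ⟨fun a b h => e.injective (Fin.succAbove_right_injective h), ?_⟩
    rintro ⟨t, ht⟩
    exact Fin.succAbove_ne _ _ ht)

@[simp] lemma pcons_zero {k : ℕ} (p : Fin (k+1)) (e : Equiv.Perm (Fin k)) : pcons p e 0 = p := rfl
@[simp] lemma pcons_succ {k : ℕ} (p : Fin (k+1)) (e : Equiv.Perm (Fin k)) (t : Fin k) :
    pcons p e t.succ = p.succAbove (e t) := rfl
@[simp] lemma psnoc_last {k : ℕ} (p : Fin (k+1)) (e : Equiv.Perm (Fin k)) :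
    psnoc p e (Fin.last k) = p := by simp [psnoc]
@[simp] lemma psnoc_castSucc {k : ℕ} (p : Fin (k+1)) (e : Equiv.Perm (Fin k)) (t : Fin k) :
    psnoc p e t.castSucc = p.succAbove (e t) := by simp [psnoc]

lemma pcons_bij (k : ℕ) : Function.Bijective
    (fun pe : Fin (k+1) × Equiv.Perm (Fin k) => pcons pe.1 pe.2) := by
  rw [Fintype.bijective_iff_injective_and_card]
  constructor
  · rintro ⟨p, e⟩ ⟨p', e'⟩ h
    have h0 : p = p' := by simpa using congrArg (fun w => w 0) h
    subst h0
    congr 1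
    ext1 t
    have := congrArg (fun w => w t.succ) h
    simpa using this
  · simp [Fintype.card_perm, Nat.factorial_succ]

lemma psnoc_bij (k : ℕ) : Function.Bijective
    (fun pe : Fin (k+1) × Equiv.Perm (Fin k) => psnoc pe.1 pe.2) := by
  rw [Fintype.bijective_iff_injective_and_card]
  constructor
  · rintro ⟨p, e⟩ ⟨p', e'⟩ h
    have h0 : p = p' := by simpa using congrArg (fun w => w (Fin.last k)) h
    subst h0
    congr 1
    ext1 t
    have := congrArg (fun w => w t.castSucc) h
    simpa using this
  · simp [Fintype.card_perm, Nat.factorial_succ]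

lemma inv_pcons {k : ℕ} (p : Fin (k+1)) (e : Equiv.Perm (Fin k)) :
    invCount (pcons p e) = p + invCount e := by
  rw [invCount_eq, invCount_eq, Fin.sum_univ_succ]
  congr 1
  · rw [Fin.sum_univ_succ]
    simp only [pcons_zero, pcons_succ, Fin.succ_pos, true_and, lt_irrefl, false_and, if_false, zero_add]
    exact card_lt' p e
  · refine Finset.sum_congr rfl fun i _ => ?_
    rw [Fin.sum_univ_succ]
    simp

lemma inv_psnoc {k : ℕ} (p : Fin (k+1)) (e : Equiv.Perm (Fin k)) :
    invCount (psnoc p e) = (k - p) + invCount e := by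
  rw [invCount_eq, invCount_eq, Finset.sum_comm, Fin.sum_univ_castSucc, add_comm]
  congr 1
  · rw [Fin.sum_univ_castSucc]
    simp only [psnoc_last, psnoc_castSucc, Fin.castSucc_lt_last, true_and, lt_irrefl, false_and, if_false, add_zero]
    exact card_gt' p e
  · refine Eq.trans ?_ Finset.sum_comm
    refine Finset.sum_congr rfl fun i _ => ?_
    rw [Fin.sum_univ_castSucc]
    simp [not_lt.2 (Fin.le_last _)]

lemma oprod_succ {k : ℕ} (g : Fin (k+1) → A) : oprod g = g 0 * oprod (fun t => g t.succ) := by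
  simp [oprod, List.ofFn_succ]

lemma oprod_castSucc {k : ℕ} (g : Fin (k+1) → A) :
    oprod g = oprod (fun t => g t.castSucc) * g (Fin.last k) := by
  rw [oprod, List.ofFn_succ', List.concat_eq_append, List.prod_append]
  simp [oprod]

lemma PP_first (q : Rˣ) {k : ℕ} (g : Fin (k+1) → Fin (k+1) → A) :
    PP q g = ∑ p : Fin (k+1), (((-q) ^ (p : ℕ) : Rˣ) : R) •
      (g 0 p * PP q (fun t i => g t.succ (p.succAbove i))) := by
  unfold PP
  rw [← (pcons_bij k).sum_comp, Fintype.sum_prod_type]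
  refine Finset.sum_congr rfl fun p _ => ?_
  rw [Finset.mul_sum, Finset.smul_sum]
  refine Finset.sum_congr rfl fun e _ => ?_
  rw [inv_pcons, oprod_succ, mul_smul_comm, smul_smul, pow_add, Units.val_mul]
  simp

lemma PP_last (q : Rˣ) {k : ℕ} (g : Fin (k+1) → Fin (k+1) → A) :
    PP q g = ∑ p : Fin (k+1), (((-q) ^ (k - (p : ℕ)) : Rˣ) : R) •
      (PP q (fun t i => g t.castSucc (p.succAbove i)) * g (Fin.last k) p) := by
  unfold PP
  rw [← (psnoc_bij k).sum_comp, Fintype.sum_prod_type]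
  refine Finset.sum_congr rfl fun p _ => ?_
  rw [Finset.sum_mul, Finset.smul_sum]
  refine Finset.sum_congr rfl fun e _ => ?_
  rw [inv_psnoc, oprod_castSucc, smul_mul_assoc, smul_smul, pow_add, Units.val_mul]
  simp

lemma PP_zero (q : Rˣ) (g : Fin 0 → Fin 0 → A) : PP q g = 1 := by
  simp [PP, invCount, oprod]

lemma PP_one (q : Rˣ) (g : Fin 1 → Fin 1 → A) : PP q g = g 0 0 := by
  rw [PP_first]; simp [PP_zero]

lemma PP_two (q : Rˣ) (g : Fin 2 → Fin 2 → A) :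
    PP q g = g 0 0 * g 1 1 - (q : R) • (g 0 1 * g 1 0) := by
  rw [PP_first]
  simp [Fin.sum_univ_two, PP_one, sub_eq_add_neg]

lemma PP_adj (q : Rˣ) (c : R) : ∀ {k : ℕ} (g h : Fin (k+1) → Fin (k+1) → A) (t : Fin k)
    (_ : ∀ s, s ≠ t.castSucc → s ≠ t.succ → h s = g s)
    (_ : ∀ a b, a < b →
      h t.castSucc a * h t.succ b - (q : R) • (h t.castSucc b * h t.succ a) =
      c • (g t.castSucc a * g t.succ b - (q : R) • (g t.castSucc b * g t.succ a))),
    PP q h = c • PP q g := by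
  intro k
  induction k with
  | zero => intro g h t; exact t.elim0
  | succ k ih =>
    intro g h t h1 h2
    induction t using Fin.cases with
    | succ t =>
      rw [PP_first, PP_first q g, Finset.smul_sum]
      refine Finset.sum_congr rfl fun p _ => ?_
      have h0 : h 0 = g 0 := h1 0 (by simp [Fin.ext_iff]) (by simp [Fin.ext_iff])
      rw [ih (fun t i => g t.succ (p.succAbove i)) (fun t i => h t.succ (p.succAbove i)) t, h0,
        mul_smul_comm, smul_comm]
      · intro s hs hs'
        have := h1 s.succ (by rw [← Fin.succ_castSucc]; simpa using hs) (by simpa using hs')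
        simp only [this]
      · intro a b hab
        have := h2 (p.succAbove a) (p.succAbove b) (by simpa using hab)
        simpa only [Fin.succ_castSucc] using this
    | zero =>
      cases k with
      | zero =>
        rw [PP_two, PP_two]
        exact h2 0 1 (by simp)
      | succ k =>
        rw [PP_last, PP_last q g, Finset.smul_sum]
        refine Finset.sum_congr rfl fun p _ => ?_
        have h0 : h (Fin.last _) = g (Fin.last _) :=
          h1 _ (by simp [Fin.ext_iff]) (by simp [Fin.ext_iff])
        rw [ih (fun t i => g t.castSucc (p.succAbove i)) (fun t i => h t.castSucc (p.succAbove i)) 0, h0,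
          smul_mul_assoc, smul_comm]
        · intro s hs hs'
          have := h1 s.castSucc (fun hh => hs (Fin.castSucc_injective _ hh))
            (fun hh => hs' (Fin.castSucc_injective _ hh))
          simp only [this]
        · intro a b hab
          exact h2 (p.succAbove a) (p.succAbove b) (by simpa using hab)
end aux

section main
variable {R : Type*} [CommRing R] (q : Rˣ) (n : ℕ)

lemma xq_col {i j : Fin n} (k : Fin n) (h : i < j) :
    xq R q n i k * xq R q n j k = (q : R) • (xq R q n j k * xq R q n i k) := by
  have := RingQuot.mkAlgHom_rel R (QMRel.col (R := R) (q := q) (k := k) h)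
  simpa only [xq, map_mul, map_smul] using this

lemma xq_row {i j : Fin n} (k : Fin n) (h : i < j) :
    xq R q n k i * xq R q n k j = (q : R) • (xq R q n k j * xq R q n k i) := by
  have := RingQuot.mkAlgHom_rel R (QMRel.row (R := R) (q := q) (k := k) h)
  simpa only [xq, map_mul, map_smul] using this

lemma xq_comm {i j k l : Fin n} (h : i < k) (h' : l < j) :
    xq R q n i j * xq R q n k l = xq R q n k l * xq R q n i j := by
  have := RingQuot.mkAlgHom_rel R (QMRel.comm (R := R) (q := q) h h')
  simpa only [xq, map_mul, map_smul] using this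

lemma xq_qcomm {i j k l : Fin n} (h : i < k) (h' : j < l) :
    xq R q n i j * xq R q n k l = xq R q n k l * xq R q n i j +
      ((q : R) - ((q⁻¹ : Rˣ) : R)) • (xq R q n i l * xq R q n k j) := by
  have := RingQuot.mkAlgHom_rel R (QMRel.qcomm (R := R) (q := q) h h')
  simpa only [xq, map_mul, map_smul, map_add] using this

/-- right form -/
noncomputable def FR {k : ℕ} (rows cols : Fin k → Fin n) : AqAlg R q n :=
  PP q (fun t i => xq R q n (rows i) (cols t))
/-- left form -/
noncomputable def FL {k : ℕ} (rows cols : Fin k → Fin n) : AqAlg R q n :=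
  PP q (fun t i => xq R q n (rows t) (cols i))

lemma csl {k : ℕ} (m : Fin (k+1)) : m.castSucc.succAbove (Fin.last k) = Fin.last (k+1) := by
  rw [Fin.succAbove_of_le_castSucc]
  · simp
  · simpa using Fin.le_last m

lemma FR_eq_FL : ∀ (k : ℕ) (rows cols : Fin k → Fin n), StrictMono rows → StrictMono cols →
    FR (R := R) q n rows cols = FL q n rows cols
  | 0, _, _, _, _ => by simp [FR, FL, PP_zero]
  | 1, _, _, _, _ => by simp [FR, FL, PP_one]
  | k+2, rows, cols, hr, hc => by
    have key : ∀ (m l : Fin (k+1)), FL (R := R) q n (fun t => rows (m.succAbove t).castSucc) (fun t => cols (l.succAbove t).castSucc)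
       = FR q n (fun t => rows (m.succAbove t).castSucc) (fun t => cols (l.succAbove t).castSucc) := by
      intro m l
      rw [FR_eq_FL k]
      · exact hr.comp (Fin.strictMono_castSucc.comp (Fin.strictMono_succAbove m))
      · exact hc.comp (Fin.strictMono_castSucc.comp (Fin.strictMono_succAbove l))
    have e1 : FR (R := R) q n rows cols = ∑ p : Fin (k+2), (((-q) ^ (k + 1 - (p : ℕ)) : Rˣ) : R) •
      (FL q n (fun i => rows (p.succAbove i)) (fun t => cols t.castSucc) *
        xq R q n (rows p) (cols (Fin.last _))) := by
      rw [FR, PP_last]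
      refine Finset.sum_congr rfl fun p _ => ?_
      rw [← FR_eq_FL (k+1) (fun i => rows (p.succAbove i)) (fun t => cols t.castSucc) (hr.comp (Fin.strictMono_succAbove p)) (hc.comp Fin.strictMono_castSucc)]
      rfl
    have e2 : FL (R := R) q n rows cols = ∑ p : Fin (k+2), (((-q) ^ (k + 1 - (p : ℕ)) : Rˣ) : R) •
      (FR q n (fun t => rows t.castSucc) (fun i => cols (p.succAbove i)) *
        xq R q n (rows (Fin.last _)) (cols p)) := by
      rw [FL, PP_last]
      refine Finset.sum_congr rfl fun p _ => ?_
      rw [FR_eq_FL (k+1) (fun t => rows t.castSucc) (fun i => cols (p.succAbove i)) (hr.comp Fin.strictMono_castSucc) (hc.comp (Fin.strictMono_succAbove p))]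
      rfl
    rw [e1, e2, Fin.sum_univ_castSucc, Fin.sum_univ_castSucc (n := k+1)]
    congr 1
    · have f1 : ∀ m : Fin (k+1), FL (R := R) q n (fun i => rows (m.castSucc.succAbove i)) (fun t => cols t.castSucc)
          = ∑ l : Fin (k+1), (((-q) ^ (k - (l : ℕ)) : Rˣ) : R) •
            (FL q n (fun t => rows (m.succAbove t).castSucc) (fun t => cols (l.succAbove t).castSucc)
              * xq R q n (rows (Fin.last _)) (cols l.castSucc)) := by
        intro m
        rw [FL, PP_last]
        refine Finset.sum_congr rfl fun l _ => ?_
        simp only [Fin.castSucc_succAbove_castSucc, csl, FL]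
      have f2 : ∀ l : Fin (k+1), FR (R := R) q n (fun t => rows t.castSucc) (fun i => cols (l.castSucc.succAbove i))
          = ∑ m : Fin (k+1), (((-q) ^ (k - (m : ℕ)) : Rˣ) : R) •
            (FR q n (fun t => rows (m.succAbove t).castSucc) (fun t => cols (l.succAbove t).castSucc)
              * xq R q n (rows m.castSucc) (cols (Fin.last _))) := by
        intro m
        rw [FR, PP_last]
        refine Finset.sum_congr rfl fun l _ => ?_
        simp only [Fin.castSucc_succAbove_castSucc, csl, FR]
      simp only [f1, f2, Finset.sum_mul, Finset.smul_sum]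
      rw [Finset.sum_comm]
      refine Finset.sum_congr rfl fun l _ => Finset.sum_congr rfl fun m _ => ?_
      rw [key, smul_mul_assoc, smul_mul_assoc, smul_smul, smul_smul, mul_assoc, mul_assoc,
        ← xq_comm q n (hr (Fin.castSucc_lt_last m)) (hc (Fin.castSucc_lt_last l)),
        ← Units.val_mul, ← Units.val_mul, ← pow_add, ← pow_add]
      congr 3
      have := m.2; have := l.2
      simp only [Fin.val_castSucc]
      omega
    · simp only [Fin.succAbove_last]
      rw [FR_eq_FL (k+1)]
      · exact hr.comp Fin.strictMono_castSucc
      · exact hc.comp Fin.strictMono_castSucc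

lemma FR_eq_zero {k : ℕ} (rows cols : Fin (k+1) → Fin n) (hr : StrictMono rows) (t : Fin k)
    (h : cols t.castSucc = cols t.succ) : FR (R := R) q n rows cols = 0 := by
  rw [FR, PP_adj q 0 (fun t i => xq R q n (rows i) (cols t)) _ t (fun _ _ _ => rfl), zero_smul]
  intro a b hab
  rw [zero_smul, h, xq_col q n _ (hr hab), sub_self]

lemma FL_eq_zero {k : ℕ} (rows cols : Fin (k+1) → Fin n) (hr : StrictMono cols) (t : Fin k)
    (h : rows t.castSucc = rows t.succ) : FL (R := R) q n rows cols = 0 := by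
  rw [FL, PP_adj q 0 (fun t i => xq R q n (rows t) (cols i)) _ t (fun _ _ _ => rfl), zero_smul]
  intro a b hab
  rw [zero_smul, h, xq_row q n _ (hr hab), sub_self]

lemma FR_swap {k : ℕ} (rows cols cols' : Fin (k+1) → Fin n) (hr : StrictMono rows) (t : Fin k)
    (h : cols t.castSucc < cols t.succ) (h1 : cols' t.castSucc = cols t.succ)
    (h2 : cols' t.succ = cols t.castSucc)
    (h3 : ∀ s, s ≠ t.castSucc → s ≠ t.succ → cols' s = cols s) :
    FR (R := R) q n rows cols' = (-(q : R)) • FR q n rows cols := by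
  rw [FR, PP_adj q (-(q : R)) (fun t i => xq R q n (rows i) (cols t)) _ t]
  · rfl
  · intro s hs hs'
    simp only [h3 s hs hs']
  intro a b hab
  simp only [h1, h2]
  have ha := xq_comm (R := R) q n (hr hab) h
  have hb := xq_qcomm (R := R) q n (hr hab) h
  have hb' : xq R q n (rows b) (cols t.succ) * xq R q n (rows a) (cols t.castSucc) =
    xq R q n (rows a) (cols t.castSucc) * xq R q n (rows b) (cols t.succ) -
      ((q : R) - ((q⁻¹ : Rˣ) : R)) • (xq R q n (rows a) (cols t.succ) * xq R q n (rows b) (cols t.castSucc)) := by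
    rw [hb]; abel
  rw [hb', ← ha]
  have hq : (q : R) * ((q⁻¹ : Rˣ) : R) = 1 := by simp
  simp only [smul_sub, smul_smul, mul_sub, hq]
  module


lemma ins_a {m : ℕ} (d : Fin m → Fin n) (j : Fin n) (s : Fin m) :
    (s.succ.insertNth (α := fun _ => Fin n) j d) s.castSucc = d s := by
  have := Fin.insertNth_apply_succAbove (α := fun _ => Fin n) s.succ j d s
  simpa using this

lemma ins_b {m : ℕ} (d : Fin m → Fin n) (j : Fin n) (s : Fin m) :
    (s.castSucc.insertNth (α := fun _ => Fin n) j d) s.succ = d s := by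
  have := Fin.insertNth_apply_succAbove (α := fun _ => Fin n) s.castSucc j d s
  simpa using this

lemma ins_step {m : ℕ} (rows : Fin (m+1) → Fin n) (hr : StrictMono rows) (d : Fin m → Fin n)
    (j : Fin n) (s : Fin m) (h : j < d s) :
    FR (R := R) q n rows (s.succ.insertNth (α := fun _ => Fin n) j d) =
      (-(q : R)) • FR q n rows (s.castSucc.insertNth (α := fun _ => Fin n) j d) := by
  apply FR_swap q n rows _ _ hr s
  · rw [ins_b, Fin.insertNth_apply_same]; exact h
  · rw [ins_b, ins_a]
  · rw [Fin.insertNth_apply_same, Fin.insertNth_apply_same]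
  · intro r h1 h2
    obtain ⟨i, rfl⟩ := Fin.exists_succAbove_eq h2
    have hi : s.succ.succAbove i = s.castSucc.succAbove i := by
      have : i ≠ s := by rintro rfl; simp at h1
      simp only [Fin.succAbove, Fin.lt_def, Fin.val_castSucc, Fin.val_succ]
      have : (i : ℕ) ≠ s := fun h => this (Fin.ext h)
      split_ifs <;> first | rfl | omega
    rw [Fin.insertNth_apply_succAbove, hi, Fin.insertNth_apply_succAbove]

lemma ins_zero {m : ℕ} (rows : Fin (m+1) → Fin n) (hr : StrictMono rows) (d : Fin m → Fin n)
    (hd : StrictMono d) (j : Fin n) (i : Fin m) (hi : d i = j) :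
    ∀ (s : Fin (m+1)), i.castSucc < s →
      FR (R := R) q n rows (s.insertNth (α := fun _ => Fin n) j d) = 0 := by
  intro s
  induction s using Fin.induction with
  | zero => intro h; exact absurd h (by simp)
  | succ s ih =>
    intro h
    have hle : i ≤ s := by
      simp only [Fin.lt_def, Fin.val_castSucc, Fin.val_succ] at h
      exact Fin.le_def.2 (by omega)
    rcases eq_or_lt_of_le hle with rfl | hlt
    · exact FR_eq_zero q n rows _ hr i (by rw [ins_a, Fin.insertNth_apply_same, hi])
    · rw [ins_step q n rows hr d j s (by rw [← hi]; exact hd hlt), ih (by simpa using hlt), smul_zero]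

lemma ins_id {m : ℕ} (rows : Fin (m+1) → Fin (m+1)) (hr : StrictMono rows) (l : Fin (m+1)) :
    ∀ (s : Fin (m+1)), l ≤ s →
      FR (R := R) q (m+1) rows (s.insertNth (α := fun _ => Fin (m+1)) l l.succAbove) =
      (((-q) ^ ((s : ℕ) - l) : Rˣ) : R) • FR q (m+1) rows (fun t => t) := by
  have base : (l.insertNth (α := fun _ => Fin (m+1)) l l.succAbove) = fun t => t := by
    funext t
    induction t using Fin.succAboveCases l with
    | x => simp
    | p i => simp
  intro s
  induction s using Fin.induction with
  | zero =>
    intro h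
    have : l = 0 := by simpa using h
    subst this
    rw [base]; simp
  | succ s ih =>
    intro h
    rcases eq_or_lt_of_le h with h | h
    · subst h; rw [base]; simp
    · have h' : l ≤ s.castSucc := by
        simp only [Fin.lt_def, Fin.le_def, Fin.val_castSucc, Fin.val_succ] at *
        omega
      rw [ins_step, ih h', smul_smul]
      · congr 1
        have : ((s.succ : Fin (m+1)) : ℕ) - l = ((s.castSucc : Fin (m+1)) : ℕ) - l + 1 := by
          simp only [Fin.le_def, Fin.val_castSucc, Fin.val_succ] at *
          omega
        rw [this, pow_succ']
        simp
      · exact hr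
      · rw [Fin.succAbove_of_le_castSucc _ _ h']; exact h

/-- the adjugate -/
noncomputable def SS (m : ℕ) (l i : Fin (m+1)) : AqAlg R q (m+1) :=
  (((-q) ^ ((l : ℤ) - (i : ℤ)) : Rˣ) : R) • compMinor R q (m+1) i l

lemma omit_eq {m : ℕ} (i : Fin (m+1)) : omitIdx i = i.succAbove := by
  funext t
  simp only [omitIdx, Fin.succAbove, Fin.lt_def, Fin.val_castSucc]
  split_ifs <;> rfl

lemma comp_FR (m : ℕ) (l i : Fin (m+1)) :
    compMinor R q (m+1) i l = FR q (m+1) i.succAbove l.succAbove := by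
  rw [compMinor, omit_eq, omit_eq]; rfl

lemma comp_FL (m : ℕ) (l i : Fin (m+1)) :
    compMinor R q (m+1) i l = FL q (m+1) i.succAbove l.succAbove := by
  rw [comp_FR, FR_eq_FL]
  · exact Fin.strictMono_succAbove i
  · exact Fin.strictMono_succAbove l

lemma det_FR (m : ℕ) : detq R q (m+1) = FR q (m+1) (fun t => t) (fun t => t) := rfl

lemma det_FL (m : ℕ) : detq R q (m+1) = FL q (m+1) (fun t => t) (fun t => t) := by
  rw [det_FR, FR_eq_FL] <;> exact strictMono_id

lemma smid (m : ℕ) : StrictMono (fun t : Fin m => t) := strictMono_id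

lemma XS (m : ℕ) (i : Fin (m+1)) :
    ∑ l, xq R q (m+1) 0 l * SS q m l i = if i = 0 then detq R q (m+1) else 0 := by
  have h : FL (R := R) q (m+1) (Fin.cons 0 i.succAbove : Fin (m+1) → Fin (m+1)) (fun t => t) =
      (((-q) ^ (i : ℤ) : Rˣ) : R) • ∑ l, xq R q (m+1) 0 l * SS q m l i := by
    rw [FL, PP_first, Finset.smul_sum]
    refine Finset.sum_congr rfl fun l _ => ?_
    rw [SS, mul_smul_comm, smul_smul, ← Units.val_mul, ← zpow_add, comp_FL, FL]
    simp
  have h2 : ∑ l, xq R q (m+1) 0 l * SS q m l i = (((-q) ^ (-(i : ℤ)) : Rˣ) : R) •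
      FL (R := R) q (m+1) (Fin.cons 0 i.succAbove : Fin (m+1) → Fin (m+1)) (fun t => t) := by
    rw [h, smul_smul, ← Units.val_mul, ← zpow_add]; simp
  rw [h2]
  split_ifs with hi
  · subst hi
    have : (Fin.cons 0 (Fin.succAbove 0) : Fin (m+1) → Fin (m+1)) = fun t => t := by
      funext t; induction t using Fin.cases <;> simp
    rw [this, det_FL]; simp
  · cases m with
    | zero => exact absurd (Fin.ext (by have := i.2; simp only [Fin.val_zero]; omega)) hi
    | succ m =>
      rw [FL_eq_zero _ _ _ _ (smid _) 0, smul_zero]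
      rw [Fin.cons_succ]
      simp [Fin.succAbove_ne_zero_zero hi]

lemma SX (m : ℕ) (l j : Fin (m+1)) :
    ∑ i, SS q m l i * xq R q (m+1) i j = if l = j then detq R q (m+1) else 0 := by
  have h : FR (R := R) q (m+1) (fun t => t)
      ((Fin.last m).insertNth (α := fun _ => Fin (m+1)) j l.succAbove) =
      (((-q) ^ ((m : ℤ) - l) : Rˣ) : R) • ∑ i, SS q m l i * xq R q (m+1) i j := by
    rw [FR, PP_last, Finset.smul_sum]
    refine Finset.sum_congr rfl fun i _ => ?_
    rw [SS, smul_mul_assoc, smul_smul, ← Units.val_mul, ← zpow_add, comp_FR, FR]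
    have e : ((m - (i : ℕ) : ℕ) : ℤ) = (m : ℤ) - l + (l - i) := by
      have := i.2
      omega
    rw [← zpow_natCast, e, Fin.insertNth_apply_same]
    have e2 : ∀ t : Fin m, ((Fin.last m).insertNth (α := fun _ => Fin (m+1)) j l.succAbove) t.castSucc
        = l.succAbove t := by
      intro t
      have := Fin.insertNth_apply_succAbove (α := fun _ => Fin (m+1)) (Fin.last m) j l.succAbove t
      simpa only [Fin.succAbove_last] using this
    simp only [e2]
  have h2 : ∑ i, SS q m l i * xq R q (m+1) i j = (((-q) ^ (-((m : ℤ) - l)) : Rˣ) : R) •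
      FR (R := R) q (m+1) (fun t => t)
      ((Fin.last m).insertNth (α := fun _ => Fin (m+1)) j l.succAbove) := by
    rw [h, smul_smul, ← Units.val_mul, ← zpow_add]; simp
  rw [h2]
  split_ifs with hi
  · subst hi
    rw [ins_id q _ (smid _) _ _ (Fin.le_last _), smul_smul, ← Units.val_mul, ← zpow_natCast,
      ← zpow_add, ← det_FR]
    have : (-((m : ℤ) - l) + (((Fin.last m : Fin (m+1)) : ℕ) - (l : ℕ) : ℕ)) = 0 := by
      have := l.2
      simp only [Fin.val_last]
      omega
    rw [this]; simp
  · obtain ⟨i, hi'⟩ := Fin.exists_succAbove_eq (Ne.symm hi)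
    rw [ins_zero q _ _ (smid _) _ (Fin.strictMono_succAbove l) j i hi' _ (Fin.castSucc_lt_last i),
      smul_zero]

lemma det_comm (m : ℕ) (j : Fin (m+1)) : Commute (xq R q (m+1) 0 j) (detq R q (m+1)) := by
  have h1 : ∑ i, (∑ l, xq R q (m+1) 0 l * SS q m l i) * xq R q (m+1) i j =
      ∑ l, xq R q (m+1) 0 l * ∑ i, SS q m l i * xq R q (m+1) i j := by
    simp only [Finset.sum_mul, Finset.mul_sum, mul_assoc]
    rw [Finset.sum_comm]
  simp only [XS, SX] at h1
  simp only [ite_mul, mul_ite, zero_mul, mul_zero, Finset.sum_ite_eq', Finset.mem_univ, if_true] at h1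
  exact h1.symm

end main

/-- `ι(𝔡et_q^{(k)}) = det_q^k` in `A_q(n, nk)` for every `k ≥ 1`. -/
theorem stmt13 (R : Type*) [CommRing R] (q : Rˣ) (n : ℕ) [NeZero n] (k : ℕ) (hk : 1 ≤ k) :
    iotaHat R q n (detMix R n k) = detq R q n ^ k := by
  clear hk
  obtain ⟨m, rfl⟩ : ∃ m, n = m + 1 := Nat.exists_eq_succ_of_ne_zero (NeZero.ne n)
  induction k with
  | zero => simp [detMix]
  | succ k ih =>
    have hX : ∀ l, iotaHat R q (m+1) (Xg R (m+1) 0 l) = xq R q (m+1) 0 l := by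
      intro l; simp [iotaHat, Xg]
    have hS : ∀ l, iotaHat R q (m+1) (Xs R (m+1) 0 l) = SS q m l 0 := by
      intro l; simp [iotaHat, Xs, SS]
    rw [detMix, map_sum]
    have : ∀ l, iotaHat R q (m+1) (Xg R (m+1) 0 l * detMix R (m+1) k * Xs R (m+1) 0 l) =
        detq R q (m+1) ^ k * (xq R q (m+1) 0 l * SS q m l 0) := by
      intro l
      rw [map_mul, map_mul, ih, hX, hS, ((det_comm q m l).pow_right k).eq, mul_assoc]
    rw [Finset.sum_congr rfl fun l _ => this l, ← Finset.mul_sum, XS, if_pos rfl, pow_succ]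
end

section
/- Let k ≥ 2 and let C and D be disjoint finite sets of integers with |C| = k−1 and C nonempty. Let c_max = max C, D_− = {d ∈ D : d < c_max}, and for an integer x set m(x) = |{c ∈ C : c > x}|. Then for every subset S ⊆ C ∪ D_− with |S| = k there exists d ∈ D ∩ S such that m(d) = |{s ∈ S : s > d}|. -/
/-- Let `k ≥ 2` and let `C` and `D` be disjoint finite sets of
integers with `|C| = k−1` and `C` nonempty.  Let `c_max = max C`,
`D_− = {d ∈ D : d < c_max}`, and for an integer `x` set
`m(x) = |{c ∈ C : c > x}|`.  Then for every `S ⊆ C ∪ D_−` with `|S| = k`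
there exists `d ∈ D ∩ S` with `m(d) = |{s ∈ S : s > d}|`. -/
theorem stmt17 (k : ℕ) (hk : 2 ≤ k) (C D : Finset ℤ) (hdisj : Disjoint C D)
    (hCcard : C.card = k - 1) (hCne : C.Nonempty) :
    ∀ S ⊆ C ∪ (D.filter (fun d => d < C.max' hCne)), S.card = k →
      ∃ d ∈ D ∩ S, (C.filter (fun c => d < c)).card = (S.filter (fun s => d < s)).card := by
  intro S hS hScard
  have hSne : S.Nonempty := by
    rw [← Finset.card_pos]; omega
  set T := S.filter (fun x => (C.filter (fun c => x ≤ c)).card < (S.filter (fun s => x ≤ s)).card) with hT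
  have hTne : T.Nonempty := by
    refine ⟨S.min' hSne, ?_⟩
    rw [hT, Finset.mem_filter]
    refine ⟨S.min'_mem hSne, ?_⟩
    have h1 : S.filter (fun s => S.min' hSne ≤ s) = S :=
      Finset.filter_true_of_mem (fun s hs => S.min'_le s hs)
    rw [h1]
    have := Finset.card_filter_le C (fun c => S.min' hSne ≤ c)
    omega
  obtain ⟨x, hxT, hmax⟩ : ∃ x ∈ T, ∀ y ∈ T, y ≤ x :=
    ⟨T.max' hTne, T.max'_mem hTne, fun y hy => T.le_max' y hy⟩
  rw [hT, Finset.mem_filter] at hxT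
  obtain ⟨hxS, hx⟩ := hxT
  have key : (S.filter (fun s => x < s)).card ≤ (C.filter (fun c => x < c)).card := by
    by_contra! hlt
    have hne : (S.filter (fun s => x < s)).Nonempty := by
      rw [← Finset.card_pos]; omega
    obtain ⟨y, hy, hmin⟩ : ∃ y ∈ S.filter (fun s => x < s), ∀ z ∈ S.filter (fun s => x < s), y ≤ z :=
      ⟨_, Finset.min'_mem _ hne, fun z hz => Finset.min'_le _ z hz⟩
    rw [Finset.mem_filter] at hy
    have h1 : (S.filter (fun s => x < s)).card ≤ (S.filter (fun s => y ≤ s)).card := by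
      apply Finset.card_le_card
      intro z hz
      exact Finset.mem_filter.2 ⟨(Finset.mem_filter.1 hz).1, hmin z hz⟩
    have h2 : (C.filter (fun c => y ≤ c)).card ≤ (C.filter (fun c => x < c)).card := by
      apply Finset.card_le_card
      intro z hz
      rw [Finset.mem_filter] at hz ⊢
      exact ⟨hz.1, lt_of_lt_of_le hy.2 hz.2⟩
    have := hmax y (Finset.mem_filter.2 ⟨hy.1, by omega⟩)
    omega
  have split : ∀ A : Finset ℤ, x ∈ A →
      (A.filter (fun s => x ≤ s)).card = (A.filter (fun s => x < s)).card + 1 := by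
    intro A hA
    rw [← Finset.card_insert_of_notMem (a := x) (s := A.filter (fun s => x < s)) (by simp)]
    congr 1
    ext z
    simp only [Finset.mem_filter, Finset.mem_insert]
    constructor
    · rintro ⟨h1, h2⟩
      rcases h2.eq_or_lt with h | h
      · exact Or.inl h.symm
      · exact Or.inr ⟨h1, h⟩
    · rintro (h | ⟨h1, h2⟩)
      · subst h; exact ⟨hA, le_rfl⟩
      · exact ⟨h1, h2.le⟩
  have hs := split S hxS
  have hxC : x ∉ C := by
    intro h
    have := split C h
    omega
  have hxD : x ∈ D := by
    have := hS hxS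
    rw [Finset.mem_union, Finset.mem_filter] at this
    tauto
  refine ⟨x, Finset.mem_inter.2 ⟨hxD, hxS⟩, ?_⟩
  have h3 : (C.filter (fun c => x < c)).card ≤ (C.filter (fun c => x ≤ c)).card := by
    apply Finset.card_le_card
    intro z hz
    rw [Finset.mem_filter] at hz ⊢
    exact ⟨hz.1, hz.2.le⟩
  omega
end
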